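/- In every execution of Vaughan's algorithm on the token swapping instance T_{k,b}, the total number of happy swaps performed is at most bk. -/

import Mathlib

namespace Straying

/-- Apply a sequence of swaps to a placement (each token is named by its initial
vertex; the placement sends each token to its current vertex). -/
def applySeq {V : Type*} [DecidableEq V] (σ : List (V × V)) (p : Equiv.Perm V) :
    Equiv.Perm V :=
  σ.foldl (fun q e => q.trans (Equiv.swap e.1 e.2)) p

/-- The position of the token named `u` after the first `τ` swaps of `σ`. -/
def posAt {V : Type*} [DecidableEq V] (σ : List (V × V)) (u : V) (τ : ℕ) : V :=
  applySeq (σ.take τ) 1 u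

/-- The unordered pair of tokens exchanged by the `i`-th swap of `σ`. -/
def swappedPair {V : Type*} [DecidableEq V] (σ : List (V × V)) (i : Fin σ.length) :
    Sym2 V :=
  s((applySeq (σ.take i) 1).symm (σ.get i).1, (applySeq (σ.take i) 1).symm (σ.get i).2)

/-- A swap sequence is minimal if no pair of tokens swaps with each other more than
once. -/
def MinimalSeq {V : Type*} [DecidableEq V] (σ : List (V × V)) : Prop :=
  ∀ i j : Fin σ.length, i < j → swappedPair σ i ≠ swappedPair σ j

/-- A swap sequence is `ℓ`-straying (with respect to the system `P` of paths, `P u`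
being the path of the token named `u` from its initial vertex `u` to its target
vertex `π u`): at every intermediate configuration, every token is within distance
`ℓ` of the last vertex of its path that it has reached so far. -/
def IsStraying {V : Type*} [DecidableEq V] (G : SimpleGraph V) (π : Equiv.Perm V)
    (σ : List (V × V)) (P : ∀ u : V, G.Walk u (π u)) (ℓ : ℕ) : Prop :=
  ∀ τ ≤ σ.length, ∀ u : V, ∃ i ≤ (P u).length,
    (∃ τ' ≤ τ, posAt σ u τ' = (P u).getVert i) ∧
    (∀ j ≤ (P u).length, (∃ τ' ≤ τ, posAt σ u τ' = (P u).getVert j) → j ≤ i) ∧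
    G.dist (posAt σ u τ) ((P u).getVert i) ≤ ℓ

end Straying

namespace Straying

/-!
The instance `T_{k,b}`: a tree consisting of `b` branches (paths of length `k`) and a
set `L` of `k` extra leaves, all attached to a central vertex `c`.  The vertex `none`
is the center; `some (Sum.inl (j, i))` is the vertex of branch `j` at distance `i+1`
from the center; `some (Sum.inr l)` is the extra leaf `l`.  The tokens at the center
and the extra leaves are happy (target = initial vertex); the token at distance `i`
from `c` in branch `j` has its target at distance `i` from `c` in branch `j+1 (mod b)`.
-/

abbrev TV (b k : ℕ) := Option ((Fin b × Fin k) ⊕ Fin k)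

/-- Adjacency generator of the tree of `T_{k,b}`. -/
def trel {b k : ℕ} : TV b k → TV b k → Prop
  | none, some (Sum.inl (_, i)) => i.val = 0
  | none, some (Sum.inr _) => True
  | some (Sum.inl (j, i)), some (Sum.inl (j', i')) => j = j' ∧ i'.val = i.val + 1
  | _, _ => False

/-- The tree of the instance `T_{k,b}`. -/
def TGraph (b k : ℕ) : SimpleGraph (TV b k) := SimpleGraph.fromRel trel

/-- The target permutation of `T_{k,b}`: the token at distance `i` in branch `j` goes
to distance `i` in branch `j+1 (mod b)`; all other tokens stay put. -/
def piT (b k : ℕ) : Equiv.Perm (TV b k) :=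
  Equiv.optionCongr
    (Equiv.sumCongr (Equiv.prodCongr (finRotate b) (Equiv.refl (Fin k)))
      (Equiv.refl (Fin k)))

/-- Both tokens are branch tokens with initial vertices in the same branch. -/
def sameBranchB {b k : ℕ} (t₁ t₂ : TV b k) : Bool :=
  match t₁, t₂ with
  | some (Sum.inl (j, _)), some (Sum.inl (j', _)) => decide (j = j')
  | _, _ => false

/-- Both tokens are branch tokens with initial vertices in two different branches. -/
def diffBranchB {b k : ℕ} (t₁ t₂ : TV b k) : Bool :=
  match t₁, t₂ with
  | some (Sum.inl (j, _)), some (Sum.inl (j', _)) => decide (j ≠ j')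
  | _, _ => false

/-- The number of swaps of `σ` whose two swapped tokens satisfy `p`. -/
def countSwaps {V : Type*} [DecidableEq V] (p : V → V → Bool) :
    List (V × V) → Equiv.Perm V → ℕ
  | [], _ => 0
  | e :: rest, q =>
      (if p (q.symm e.1) (q.symm e.2) then 1 else 0) +
        countSwaps p rest (q.trans (Equiv.swap e.1 e.2))

end Straying

namespace Straying

/-!
Vaughan's algorithm.  A state is a pair `(p, q)` of placements: each token is named
by its initial vertex `u` and sits at vertex `p u`, while its destination token `u_f`
sits at vertex `q u` (initially `q = π`, placing each destination token at the
corresponding token's target vertex).  A token (resp. destination token) is *happy*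
when `p u = q u`; an unhappy token *wants* to move along an incident edge toward its
partner, i.e. to an adjacent vertex strictly closer to the partner.
-/

/-- The unhappy token named `u` wants to move (from `p u`) to the adjacent vertex
`w`, which is strictly closer to its destination token. -/
def WantsTok {V : Type*} (G : SimpleGraph V) (p q : Equiv.Perm V) (u : V) (w : V) : Prop :=
  G.Adj (p u) w ∧ G.dist w (q u) < G.dist (p u) (q u)

/-- The unhappy destination token named `u` wants to move (from `q u`) to the
adjacent vertex `w`, which is strictly closer to its token. -/
def WantsDest {V : Type*} (G : SimpleGraph V) (p q : Equiv.Perm V) (u : V) (w : V) : Prop :=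
  G.Adj (q u) w ∧ G.dist w (p u) < G.dist (q u) (p u)

/-- A happy swap: two adjacent tokens that want to move toward each other are
swapped (the destination tokens do not move). -/
def HappySwapStep {V : Type*} [DecidableEq V] (G : SimpleGraph V)
    (st st' : Equiv.Perm V × Equiv.Perm V) : Prop :=
  ∃ a c : V, G.Adj a c ∧
    WantsTok G st.1 st.2 (st.1.symm a) c ∧ WantsTok G st.1 st.2 (st.1.symm c) a ∧
    st'.1 = st.1.trans (Equiv.swap a c) ∧ st'.2 = st.2

/-- A happy destination swap: two adjacent destination tokens that want to move
toward each other are swapped (the tokens do not move). -/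
def HappyDestStep {V : Type*} [DecidableEq V] (G : SimpleGraph V)
    (st st' : Equiv.Perm V × Equiv.Perm V) : Prop :=
  ∃ a c : V, G.Adj a c ∧
    WantsDest G st.1 st.2 (st.2.symm a) c ∧ WantsDest G st.1 st.2 (st.2.symm c) a ∧
    st'.2 = st.2.trans (Equiv.swap a c) ∧ st'.1 = st.1

/-- A symmetric shove: `a` holds a token and a destination token that both want to
move to the adjacent vertex `c`, and `c` holds a happy pair; the tokens at `a, c` are
swapped and simultaneously the destination tokens at `a, c` are swapped. -/
def ShoveStep {V : Type*} [DecidableEq V] (G : SimpleGraph V)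
    (st st' : Equiv.Perm V × Equiv.Perm V) : Prop :=
  ∃ a c : V, G.Adj a c ∧
    st.1.symm c = st.2.symm c ∧
    WantsTok G st.1 st.2 (st.1.symm a) c ∧ WantsDest G st.1 st.2 (st.2.symm a) c ∧
    st'.1 = st.1.trans (Equiv.swap a c) ∧ st'.2 = st.2.trans (Equiv.swap a c)

/-!
Let `φ` be the partner permutation, sending each vertex to the vertex of the destination token of
the token lying there. A happy swap along an edge `ac` replaces `φ` by `φ * swap a c`, a happy
destination swap does the same to `φ⁻¹`, and a symmetric shove conjugates `φ` by `swap a c`. Shoves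
therefore preserve the size of the support of `φ`, which is at most `b * k` initially. A happy swap
with `φ a = c` turns `c` into a fixed point and decreases this size.

It remains to see that `φ a = c` whenever a happy swap exchanges the tokens at `a` and at its
child `c`. For this the nontrivial cycles of `φ` are kept in layers, initially by the distance to
the center, as described by `IsLayered`. If `φ a` were strictly below `c`, then `c` and `φ a` would
be inward, so `c` would lie in a lower layer than `φ a`, hence than the outward vertex `a`. This
makes `φ c` an outward vertex transposed with `c`, in a lower layer than `a` and so below `a`.
But `φ c` is above `c`, and there is nothing between `a` and `c`.
-/

open Equiv (swap swap_apply_def swap_apply_left swap_apply_right swap_apply_of_ne_of_ne)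

section General

theorem card_filter_range_add_le {P : ℕ → Prop} [DecidablePred P] {f : ℕ → ℕ} {n : ℕ}
    (hle : ∀ i < n, f (i + 1) ≤ f i) (hlt : ∀ i < n, P i → f (i + 1) < f i) :
    ((Finset.range n).filter P).card + f n ≤ f 0 := by
  induction n with
  | zero => simp
  | succ n ih =>
    have ih := ih (fun i hi => hle i (by omega)) (fun i hi => hlt i (by omega))
    rw [Finset.range_add_one, Finset.filter_insert]
    split_ifs with hP
    · rw [Finset.card_insert_of_notMem (by simp)]
      have := hlt n n.lt_succ_self hP
      omega
    · have := hle n n.lt_succ_self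
      omega

variable {V : Type*}

theorem mem_of_dist_lt_dist {G : SimpleGraph V} {S : Set V} {a c x : V} (hc : c ∈ S)
    (hadj : G.Adj a c) (hcut : ∀ u ∈ S, ∀ v ∉ S, G.Adj u v → u = c ∧ v = a)
    (hlt : G.dist c x < G.dist a x) : x ∈ S := by
  classical
  by_contra hx
  have hreach : G.Reachable c x :=
    hadj.symm.reachable.trans (.of_dist_ne_zero (Nat.ne_zero_of_lt hlt))
  obtain ⟨p, hp⟩ := hreach.exists_walk_length_eq_dist
  obtain ⟨d, hd, hd₁, hd₂⟩ := p.exists_boundary_dart S hc hx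
  have ha : a ∈ p.support :=
    (hcut _ hd₁ _ hd₂ d.adj).2 ▸ p.dart_snd_mem_support_of_mem_darts hd
  have : G.dist a x ≤ G.dist c x := calc
    G.dist a x ≤ (p.dropUntil a ha).length := SimpleGraph.dist_le _
    _ ≤ p.length := p.length_dropUntil_le_length ha
    _ = G.dist c x := hp
  omega

theorem sameCycle_induction [Finite V] {f : Equiv.Perm V} {x y : V} {P : V → Prop}
    (h : f.SameCycle x y) (hx : P x) (hf : ∀ z, P z → P (f z)) : P y := by
  obtain ⟨n, -, rfl⟩ := h.exists_pow_eq'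
  rw [← Equiv.Perm.iterate_eq_pow]
  exact Function.Iterate.rec P hx hf n

theorem eq_or_eq_apply_of_sameCycle {f : Equiv.Perm V} {x y : V} (hf : f (f x) = x)
    (h : f.SameCycle x y) : y = x ∨ y = f x := by
  obtain ⟨i, rfl⟩ := h
  exact Equiv.Perm.zpow_apply_eq_of_apply_apply_eq_self hf i

theorem sameCycle_swap_mul_iff [Finite V] [DecidableEq V] {f : Equiv.Perm V} {x y z : V}
    (hx : f x ≠ x) (hy : y ≠ x) (hz : z ≠ x) :
    (swap x (f x) * f).SameCycle y z ↔ f.SameCycle y z := by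
  set g := swap x (f x) * f with hg
  have hgx : g x = x := by simp [hg]
  have hgpre : ∀ w, f w = x → g w = f x := fun w hw => by simp [hg, hw]
  have hgw : ∀ w, w ≠ x → f w ≠ x → g w = f w := fun w hw hfw => by
    simp [hg, swap_apply_of_ne_of_ne hfw (f.injective.ne hw)]
  constructor <;> intro h
  · refine sameCycle_induction h (.refl f y) fun w hw => ?_
    by_cases hwx : w = x
    · rwa [hwx, hgx, ← hwx]
    by_cases hfw : f w = x
    · rw [hgpre w hfw, ← hfw]
      exact hw.apply_right.apply_right
    · rw [hgw w hwx hfw]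
      exact hw.apply_right
  · -- `g` skips `x`, so we follow `f` with `x` collapsed onto its successor `f x`.
    have collapse : g.SameCycle y (if z = x then f x else z) := by
      refine sameCycle_induction (P := fun w => g.SameCycle y (if w = x then f x else w)) h
        (by rw [if_neg hy]) fun w hw => ?_
      by_cases hwx : w = x
      · rw [if_pos hwx] at hw
        rwa [hwx, if_neg hx]
      rw [if_neg hwx] at hw
      split_ifs with hfw
      · exact hgpre w hfw ▸ hw.apply_right
      · exact hgw w hwx hfw ▸ hw.apply_right
    rwa [if_neg hz] at collapse

theorem sameCycle_finRotate {n : ℕ} (i j : Fin n) : (finRotate n).SameCycle i j := by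
  rcases lt_or_ge n 2 with hn | hn
  · have : Subsingleton (Fin n) := Fin.subsingleton_iff_le_one.2 (by omega)
    rw [Subsingleton.elim i j]
  · have moved (i : Fin n) : finRotate n i ≠ i := by
      rw [← Equiv.Perm.mem_support, support_finRotate_of_le hn]
      exact Finset.mem_univ i
    exact (isCycle_finRotate_of_le hn).sameCycle (moved i) (moved j)

end General

/-! ### The rooted tree -/

section Tree

variable {b k : ℕ}

/-- The strict ancestor order of the tree of `T_{k,b}` rooted at its center. -/
def ProperAncestor : TV b k → TV b k → Prop
  | none, some _ => True
  | some (Sum.inl (j, i)), some (Sum.inl (j', i')) => j = j' ∧ i.val < i'.val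
  | _, _ => False

local infix:50 " ≺ " => ProperAncestor

/-- The vertices of the tree of `T_{k,b}` lying at or below `c` when the tree is rooted at its
center. -/
def subtree (c : TV b k) : Set (TV b k) := {v | v = c ∨ c ≺ v}

/-- The branch containing a vertex of `T_{k,b}`; the center and the extra leaves have the
value `none`. -/
def branch : TV b k → Option (Fin b)
  | some (Sum.inl (j, _)) => some j
  | _ => none

variable {a c u v w : TV b k}

theorem not_properAncestor_self (v : TV b k) : ¬ v ≺ v := by
  rcases v with _ | _ | _ <;> simp [ProperAncestor]

theorem ProperAncestor.ne (h : v ≺ w) : v ≠ w := by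
  rintro rfl
  exact not_properAncestor_self v h

theorem ProperAncestor.trans (huv : u ≺ v) (hvw : v ≺ w) : u ≺ w := by
  rcases u with _ | ⟨j, i⟩ | l <;> rcases v with _ | ⟨j', i'⟩ | l' <;>
    rcases w with _ | ⟨j'', i''⟩ | l'' <;> simp only [ProperAncestor] at huv hvw ⊢
  exact ⟨huv.1.trans hvw.1, huv.2.trans hvw.2⟩

theorem ProperAncestor.asymm (h : v ≺ w) : ¬ w ≺ v := fun h' =>
  not_properAncestor_self v (h.trans h')

theorem not_properAncestor_none (v : TV b k) : ¬ v ≺ none := by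
  rcases v with _ | _ | _ <;> simp [ProperAncestor]

theorem none_properAncestor_iff : none ≺ v ↔ v ≠ none := by
  cases v <;> simp [ProperAncestor]

theorem ProperAncestor.branch_eq (h : v ≺ w) (hv : v ≠ none) : branch v = branch w := by
  rcases v with _ | ⟨j, i⟩ | l <;> rcases w with _ | ⟨j', i'⟩ | l' <;>
    simp_all [ProperAncestor, branch]

theorem ProperAncestor.branch_ne_none (h : v ≺ w) (hv : v ≠ none) : branch v ≠ none := by
  rcases v with _ | ⟨j, i⟩ | l <;> rcases w with _ | ⟨j', i'⟩ | l' <;>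
    simp_all [ProperAncestor, branch]

theorem properAncestor_or_of_branch_eq (h : branch v = branch w) (hv : branch v ≠ none)
    (hne : v ≠ w) : v ≺ w ∨ w ≺ v := by
  rcases v with _ | ⟨j, i⟩ | l <;> rcases w with _ | ⟨j', i'⟩ | l' <;>
    simp_all [ProperAncestor, branch, Fin.ext_iff]

theorem TGraph_adj : (TGraph b k).Adj a c ↔ trel a c ∨ trel c a := by
  rcases a with _ | ⟨j, i⟩ | l <;> rcases c with _ | ⟨j', i'⟩ | l' <;>
    simp [TGraph, trel, Fin.ext_iff]
  omega

theorem not_trel_none (v : TV b k) : ¬ trel v none := by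
  rcases v with _ | _ | _ <;> simp [trel]

theorem trel.properAncestor (h : trel a c) : a ≺ c := by
  rcases a with _ | ⟨j, i⟩ | l <;> rcases c with _ | ⟨j', i'⟩ | l' <;>
    simp_all [ProperAncestor, trel]

theorem trel.ne_none (h : trel a c) : c ≠ none := by
  rintro rfl
  exact not_trel_none a h

theorem trel.not_between (h : trel a c) (hac : a ≺ u) : ¬ u ≺ c := by
  rcases a with _ | ⟨j, i⟩ | l <;> rcases c with _ | ⟨j', i'⟩ | l' <;>
    rcases u with _ | ⟨j'', i''⟩ | l'' <;> simp_all [ProperAncestor, trel]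

theorem eq_none_of_properAncestor_root (h : trel none c) (hv : v ≺ c) : v = none := by
  by_contra hv₀
  exact h.not_between (none_properAncestor_iff.2 hv₀) hv

theorem root_properAncestor_of_branch_eq (h : trel none c) (hc : branch c ≠ none)
    (hv : branch v = branch c) (hne : v ≠ c) : c ≺ v := by
  refine (properAncestor_or_of_branch_eq hv.symm hc hne.symm).resolve_right fun hvc => hc ?_
  rw [← hv, eq_none_of_properAncestor_root h hvc]
  rfl

theorem trel.properAncestor_child_iff (h : trel a c) (ha : a ≠ none) (hv : v ≠ a) :
    v ≺ c ↔ v ≺ a := by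
  rcases a with _ | ⟨j, i⟩ | l <;> rcases c with _ | ⟨j', i'⟩ | l' <;>
    rcases v with _ | ⟨j'', i''⟩ | l'' <;> simp_all [ProperAncestor, trel, Fin.ext_iff]
  omega

theorem trel.parent_properAncestor_iff (h : trel a c) (ha : a ≠ none) (hv : v ≠ c) :
    a ≺ v ↔ c ≺ v := by
  rcases a with _ | ⟨j, i⟩ | l <;> rcases c with _ | ⟨j', i'⟩ | l' <;>
    rcases v with _ | ⟨j'', i''⟩ | l'' <;> simp_all [ProperAncestor, trel, Fin.ext_iff]
  omega

theorem trel.branch_swap (h : trel a c) (ha : a ≠ none) (v : TV b k) :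
    branch (swap a c v) = branch v := by
  have hac : branch a = branch c := h.properAncestor.branch_eq ha
  rw [swap_apply_def]
  split_ifs with hva hvc
  · rw [hva, hac]
  · rw [hvc, hac]
  · rfl

theorem trel.swap_properAncestor_swap_iff (h : trel a c) (ha : a ≠ none)
    (hac : ¬ (v = a ∧ w = c)) (hca : ¬ (v = c ∧ w = a)) :
    swap a c v ≺ swap a c w ↔ v ≺ w := by
  by_cases hvw : v = w
  · simp only [hvw, not_properAncestor_self]
  rcases eq_or_ne v a with rfl | hva
  · have hwc : w ≠ c := fun e => hac ⟨rfl, e⟩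
    rw [swap_apply_left, swap_apply_of_ne_of_ne (Ne.symm hvw) hwc,
      h.parent_properAncestor_iff ha hwc]
  rcases eq_or_ne v c with rfl | hvc
  · have hwa : w ≠ a := fun e => hca ⟨rfl, e⟩
    rw [swap_apply_right, swap_apply_of_ne_of_ne hwa (Ne.symm hvw),
      h.parent_properAncestor_iff ha (Ne.symm hvw)]
  rw [swap_apply_of_ne_of_ne hva hvc, swap_apply_def]
  split_ifs with hwa hwc
  · rw [hwa, h.properAncestor_child_iff ha hva]
  · rw [hwc, h.properAncestor_child_iff ha hva]
  · rfl

theorem mem_subtree_self (c : TV b k) : c ∈ subtree c := Or.inl rfl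

theorem trel.parent_notMem_subtree (h : trel a c) : a ∉ subtree c := by
  rintro (rfl | hca)
  · exact h.properAncestor.ne rfl
  · exact h.properAncestor.asymm hca

theorem trel.eq_of_adj_of_mem_subtree (h : trel a c) (hu : u ∈ subtree c)
    (hv : v ∉ subtree c) (huv : (TGraph b k).Adj u v) : u = c ∧ v = a := by
  rw [TGraph_adj] at huv
  rcases a with _ | ⟨j, i⟩ | l <;> rcases c with _ | ⟨j', i'⟩ | l' <;>
    rcases u with _ | ⟨j'', i''⟩ | l'' <;> rcases v with _ | ⟨j3, i3⟩ | l3 <;>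
    simp_all [subtree, ProperAncestor, trel, Fin.ext_iff] <;> omega

theorem trel.mem_subtree_of_dist_lt (h : trel a c)
    (hlt : (TGraph b k).dist c v < (TGraph b k).dist a v) : v ∈ subtree c :=
  mem_of_dist_lt_dist (mem_subtree_self c) (TGraph_adj.2 (.inl h))
    (fun _ hu _ hv => h.eq_of_adj_of_mem_subtree hu hv) hlt

theorem trel.notMem_subtree_of_dist_lt (h : trel a c)
    (hlt : (TGraph b k).dist a v < (TGraph b k).dist c v) : v ∉ subtree c :=
  mem_of_dist_lt_dist (S := (subtree c)ᶜ) h.parent_notMem_subtree (TGraph_adj.2 (.inr h))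
    (fun _ hu _ hv huv => (h.eq_of_adj_of_mem_subtree (not_not.1 hv) hu huv.symm).symm) hlt

/-! ### The layered invariant -/

/-- The token at `v` has its destination strictly below `v`, where `φ` is the partner permutation
sending each vertex to the vertex of the destination of the token there. -/
def Outward (φ : Equiv.Perm (TV b k)) (v : TV b k) : Prop := v ≺ φ v

/-- The token at `v` is unhappy and not outward, so its first step leads towards the center. -/
def Inward (φ : Equiv.Perm (TV b k)) (v : TV b k) : Prop := φ v ≠ v ∧ ¬ v ≺ φ v

/-- The invariant of Vaughan's algorithm on `T_{k,b}`, for the partner permutation `φ`. The function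
`layer` separates the nontrivial cycles of `φ`. Inward vertices lie on the branches, in layers
increasing away from the center. Outward vertices are pairwise comparable, in layers decreasing
away from the center, and those other than the center belong to transpositions. An inward vertex in
a lower layer than some outward vertex is transposed with an outward vertex other than the center.
Finally, the layer of an outward vertex `w` has an inward vertex on the branch of each outward
vertex below `w`, and a nontrivial layer without outward vertices has an inward vertex on every
branch. -/
structure IsLayered (φ : Equiv.Perm (TV b k)) (layer : TV b k → ℕ) : Prop where
  sameCycle_iff : ∀ ⦃v w⦄, φ v ≠ v → φ w ≠ w → (φ.SameCycle v w ↔ layer v = layer w)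
  branch_ne_none : ∀ ⦃v⦄, Inward φ v → branch v ≠ none
  inward_lt : ∀ ⦃v w⦄, Inward φ v → Inward φ w → v ≺ w → layer v < layer w
  outward_properAncestor : ∀ ⦃v w⦄, Outward φ v → Outward φ w → layer v < layer w → w ≺ v
  apply_apply : ∀ ⦃v⦄, Outward φ v → v ≠ none → φ (φ v) = v
  outward_apply : ∀ ⦃v w⦄, Outward φ v → Inward φ w → layer w < layer v →
    Outward φ (φ w) ∧ φ w ≠ none
  exists_inward_of_forall_ne : ∀ ⦃w⦄, Inward φ w → (∀ v, Outward φ v → layer v ≠ layer w) →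
    ∀ j, ∃ u, Inward φ u ∧ layer u = layer w ∧ branch u = some j
  exists_inward_of_lt : ∀ ⦃v w⦄, Outward φ v → Outward φ w → layer v < layer w → v ≠ none →
    ∃ u, Inward φ u ∧ layer u = layer w ∧ branch u = branch v

variable {φ s : Equiv.Perm (TV b k)} {layer : TV b k → ℕ}

theorem Outward.apply_ne (h : Outward φ v) : φ v ≠ v := (ProperAncestor.ne h).symm

theorem Outward.not_inward (h : Outward φ v) : ¬ Inward φ v := fun h' => h'.2 h

theorem Outward.ne_of_inward (hv : Outward φ v) (hw : Inward φ w) : v ≠ w := by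
  rintro rfl
  exact hv.not_inward hw

theorem outward_or_inward (h : φ v ≠ v) : Outward φ v ∨ Inward φ v := by
  by_cases hv : v ≺ φ v
  exacts [.inl hv, .inr ⟨h, hv⟩]

theorem outward_none_iff : Outward φ none ↔ φ none ≠ none := none_properAncestor_iff

theorem Outward.ne_none (h : Outward φ v) (h₀ : φ none = none) : v ≠ none := by
  rintro rfl
  exact outward_none_iff.1 h h₀

theorem Inward.ne_none (h : Inward φ v) : v ≠ none := by
  rintro rfl
  exact h.2 (outward_none_iff.2 h.1)

theorem inward_of_notMem_subtree (h : φ v ∉ subtree v) : Inward φ v :=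
  not_or.1 h

theorem conj_apply_apply (v : TV b k) : (s * φ * s⁻¹) (s v) = s (φ v) := by
  simp

theorem outward_conj_iff
    (hprec : ∀ v w, φ v ≠ v → φ w ≠ w → (s v ≺ s w ↔ v ≺ w)) :
    Outward (s * φ * s⁻¹) (s v) ↔ Outward φ v := by
  rw [Outward, conj_apply_apply]
  by_cases hv : φ v = v
  · simp only [Outward, hv, not_properAncestor_self]
  · exact hprec v (φ v) hv (φ.injective.ne hv)

theorem inward_conj_iff
    (hprec : ∀ v w, φ v ≠ v → φ w ≠ w → (s v ≺ s w ↔ v ≺ w)) :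
    Inward (s * φ * s⁻¹) (s v) ↔ Inward φ v := by
  refine and_congr ?_ (not_congr (outward_conj_iff hprec))
  rw [conj_apply_apply, s.injective.ne_iff]

/-- The partner permutation after a symmetric shove along the edge `ac`, which exchanges both the
tokens and the destination tokens at `a` and `c`. -/
def shove (φ : Equiv.Perm (TV b k)) (a c : TV b k) : Equiv.Perm (TV b k) :=
  swap a c * φ * (swap a c)⁻¹

theorem shove_apply (v : TV b k) : shove φ a c v = swap a c (φ (swap a c v)) := rfl

theorem shove_comm : shove φ a c = shove φ c a := by
  rw [shove, shove, Equiv.swap_comm]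

theorem card_support_shove : (shove φ a c).support.card = φ.support.card :=
  Equiv.Perm.card_support_conj

namespace IsLayered

theorem layer_apply (I : IsLayered φ layer) (v : TV b k) : layer (φ v) = layer v := by
  by_cases hv : φ v = v
  · rw [hv]
  · exact ((I.sameCycle_iff hv (φ.injective.ne hv)).1
      (Equiv.Perm.sameCycle_apply_right.2 (.refl φ v))).symm

theorem eq_or_eq_apply (I : IsLayered φ layer) (hv : φ v ≠ v) (hw : φ w ≠ w)
    (h₂ : φ (φ v) = v) (hlayer : layer v = layer w) : w = v ∨ w = φ v :=
  eq_or_eq_apply_of_sameCycle h₂ ((I.sameCycle_iff hv hw).2 hlayer)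

theorem outward_injOn_layer (I : IsLayered φ layer) (hv : Outward φ v) (hw : Outward φ w)
    (hlayer : layer v = layer w) : v = w := by
  have key {v w} (hv : Outward φ v) (hw : Outward φ w) (hlayer : layer v = layer w)
      (hv₀ : v ≠ none) : v = w := by
    have h₂ := I.apply_apply hv hv₀
    rcases I.eq_or_eq_apply hv.apply_ne hw.apply_ne h₂ hlayer with rfl | rfl
    · rfl
    · have hback : φ v ≺ v := by rwa [Outward, h₂] at hw
      exact absurd hback (ProperAncestor.asymm hv)
  by_cases hv₀ : v = none
  · by_cases hw₀ : w = none
    · rw [hv₀, hw₀]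
    · exact (key hw hv hlayer.symm hw₀).symm
  · exact key hv hw hlayer hv₀

theorem inward_apply_of_outward (I : IsLayered φ layer) (h : Outward φ v) : Inward φ (φ v) :=
  (outward_or_inward (φ.injective.ne h.apply_ne)).resolve_left fun h' =>
    h.apply_ne (I.outward_injOn_layer h h' (I.layer_apply v).symm).symm

theorem outward_inv_iff (I : IsLayered φ layer) : Outward φ⁻¹ v ↔ Outward φ v := by
  by_cases hv : v = none
  · rw [hv, outward_none_iff, outward_none_iff, Ne, Equiv.Perm.inv_eq_iff_eq, eq_comm]
  constructor
  · intro h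
    by_contra hout
    have hprec : v ≺ φ⁻¹ v := h
    have hv_inward : Inward φ v := by
      refine (outward_or_inward fun e => hprec.ne ?_).resolve_left hout
      rw [eq_comm, Equiv.Perm.inv_eq_iff_eq, e]
    have hpre_inward : Inward φ (φ⁻¹ v) := by
      simpa [Inward] using And.intro hprec.ne hprec.asymm
    have hlayer : layer v = layer (φ⁻¹ v) := by simpa using I.layer_apply (φ⁻¹ v)
    exact (I.inward_lt hv_inward hpre_inward hprec).ne hlayer
  · intro h
    have : φ⁻¹ v = φ v := by rw [Equiv.Perm.inv_eq_iff_eq, I.apply_apply h hv]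
    rwa [Outward, this]

theorem inward_inv_iff (I : IsLayered φ layer) : Inward φ⁻¹ v ↔ Inward φ v := by
  have hout : v ≺ φ⁻¹ v ↔ v ≺ φ v := I.outward_inv_iff
  rw [Inward, Inward, hout, Ne, Equiv.Perm.inv_eq_iff_eq, eq_comm]

theorem inv (I : IsLayered φ layer) : IsLayered φ⁻¹ layer := by
  have hR {v} : Outward φ⁻¹ v ↔ Outward φ v := I.outward_inv_iff
  have hQ {v} : Inward φ⁻¹ v ↔ Inward φ v := I.inward_inv_iff
  have hfix {v} : φ⁻¹ v ≠ v ↔ φ v ≠ v := by rw [Ne, Equiv.Perm.inv_eq_iff_eq, eq_comm]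
  constructor <;> simp only [hR, hQ, hfix, Equiv.Perm.sameCycle_inv]
  · exact I.sameCycle_iff
  · exact I.branch_ne_none
  · exact I.inward_lt
  · exact I.outward_properAncestor
  · intro v hv hv₀
    rw [Equiv.Perm.inv_eq_iff_eq, Equiv.Perm.inv_eq_iff_eq, I.apply_apply hv hv₀]
  · intro v w hv hw hlayer
    have hout := I.outward_apply hv hw hlayer
    have : φ⁻¹ w = φ w := by
      rw [Equiv.Perm.inv_eq_iff_eq]
      exact (φ.injective (I.apply_apply hout.1 hout.2)).symm
    rwa [this]
  · exact I.exists_inward_of_forall_ne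
  · exact I.exists_inward_of_lt

theorem apply_eq_of_trel (I : IsLayered φ layer) (h : trel a c) (ha : φ a ∈ subtree c)
    (hc : φ c ∉ subtree c) : φ a = c := by
  by_contra hne
  have hca : c ≺ φ a := ha.resolve_left hne
  have ha_out : Outward φ a := h.properAncestor.trans hca
  have hc_in : Inward φ c := inward_of_notMem_subtree hc
  have hlayer : layer c < layer a := calc
    layer c < layer (φ a) := I.inward_lt hc_in (I.inward_apply_of_outward ha_out) hca
    _ = layer a := I.layer_apply a
  obtain ⟨hφc_out, hφc_ne⟩ := I.outward_apply ha_out hc_in hlayer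
  have hφφc : φ (φ c) = c := φ.injective (I.apply_apply hφc_out hφc_ne)
  have hφc_above : φ c ≺ c := by rwa [Outward, hφφc] at hφc_out
  have hφc_below : a ≺ φ c :=
    I.outward_properAncestor hφc_out ha_out ((I.layer_apply c).trans_lt hlayer)
  exact h.not_between hφc_below hφc_above

section HappySwap

theorem swap_mul_apply_self : (swap (φ a) (φ (φ a)) * φ) a = φ (φ a) := by
  simp

theorem swap_mul_apply_next : (swap (φ a) (φ (φ a)) * φ) (φ a) = φ a := by
  simp

theorem swap_mul_apply_of_ne (hva : v ≠ a) (hv : v ≠ φ a) :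
    (swap (φ a) (φ (φ a)) * φ) v = φ v :=
  swap_apply_of_ne_of_ne (φ.injective.ne hva) (φ.injective.ne hv)

theorem outward_swap_mul_iff (I : IsLayered φ layer) (ha : Outward φ a) :
    Outward (swap (φ a) (φ (φ a)) * φ) v ↔ Outward φ v ∧ (v = a → φ (φ a) ≠ a) := by
  by_cases hva : v = a
  · subst hva
    rw [Outward, swap_mul_apply_self]
    by_cases hv₀ : v = none
    · subst hv₀
      simp only [none_properAncestor_iff, ha, forall_const, true_and]
    · simp only [I.apply_apply ha hv₀, not_properAncestor_self, ne_eq, not_true_eq_false,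
        imp_false, and_false]
  by_cases hv : v = φ a
  · subst hv
    have hout : ¬ Outward φ (φ a) := fun h => h.not_inward (I.inward_apply_of_outward ha)
    simp only [Outward, swap_mul_apply_next, not_properAncestor_self, false_iff]
    exact fun h => hout h.1
  · simp only [Outward, swap_mul_apply_of_ne hva hv, hva, false_imp_iff, and_true]

theorem inward_swap_mul_iff (I : IsLayered φ layer) (ha : Outward φ a) :
    Inward (swap (φ a) (φ (φ a)) * φ) v ↔ Inward φ v ∧ v ≠ φ a := by
  by_cases hva : v = a
  · subst hva
    have hin : ¬ Inward (swap (φ v) (φ (φ v)) * φ) v := by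
      intro h
      have hne : φ (φ v) ≠ v := by simpa only [swap_mul_apply_self] using h.1
      exact ((I.outward_swap_mul_iff ha).2 ⟨ha, fun _ => hne⟩).not_inward h
    exact iff_of_false hin fun h => ha.not_inward h.1
  by_cases hv : v = φ a
  · subst hv
    exact iff_of_false (fun h => h.1 swap_mul_apply_next) fun h => h.2 rfl
  · simp only [Inward, swap_mul_apply_of_ne hva hv, hv, ne_eq, not_false_eq_true, and_true]

theorem swap_mul_outward_apply (I : IsLayered φ layer) (ha : Outward φ a)
    (hv : Outward φ v) (hw : Inward φ w) (hwa : w ≠ φ a) (hlayer : layer w < layer v) :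
    Outward (swap (φ a) (φ (φ a)) * φ) ((swap (φ a) (φ (φ a)) * φ) w) ∧
      (swap (φ a) (φ (φ a)) * φ) w ≠ none := by
  have hw_ne : w ≠ a := (ha.ne_of_inward hw).symm
  obtain ⟨hout, hne⟩ := I.outward_apply hv hw hlayer
  rw [swap_mul_apply_of_ne hw_ne hwa]
  refine ⟨(I.outward_swap_mul_iff ha).2 ⟨hout, fun e => absurd ?_ hwa⟩, hne⟩
  rw [← e, φ.injective (I.apply_apply hout hne)]

theorem swap_mul_exists_inward_of_forall_ne (I : IsLayered φ layer) (ha : Outward φ a)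
    (hw : Inward φ w) (hwa : w ≠ φ a)
    (hlayer : ∀ v, Outward (swap (φ a) (φ (φ a)) * φ) v → layer v ≠ layer w) (j : Fin b) :
    ∃ u, Inward (swap (φ a) (φ (φ a)) * φ) u ∧ layer u = layer w ∧ branch u = some j := by
  have hlayer' (v) (hv : Outward φ v) : layer v ≠ layer w := by
    intro e
    refine hlayer v ((I.outward_swap_mul_iff ha).2 ⟨hv, ?_⟩) e
    rintro rfl h₂
    rcases I.eq_or_eq_apply ha.apply_ne hw.1 h₂ e with rfl | rfl
    exacts [ha.not_inward hw, hwa rfl]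
  obtain ⟨u, hu, hul, hub⟩ := I.exists_inward_of_forall_ne hw hlayer' j
  refine ⟨u, (I.inward_swap_mul_iff ha).2 ⟨hu, ?_⟩, hul, hub⟩
  rintro rfl
  exact hlayer' a ha ((I.layer_apply a).symm.trans hul)

theorem swap_mul_exists_inward_of_lt (I : IsLayered φ layer) (h : trel a (φ a))
    (hv : Outward φ v) (hw : Outward φ w) (hwa : w = a → φ (φ a) ≠ a)
    (hlayer : layer v < layer w) (hv₀ : v ≠ none) :
    ∃ u, Inward (swap (φ a) (φ (φ a)) * φ) u ∧ layer u = layer w ∧ branch u = branch v := by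
  have ha : Outward φ a := h.properAncestor
  obtain ⟨u, hu, hul, hub⟩ := I.exists_inward_of_lt hv hw hlayer hv₀
  refine ⟨u, (I.inward_swap_mul_iff ha).2 ⟨hu, ?_⟩, hul, hub⟩
  rintro rfl
  obtain rfl : w = a := I.outward_injOn_layer hw ha (hul.symm.trans (I.layer_apply a))
  obtain rfl : w = none := by
    by_contra hw₀
    exact hwa rfl (I.apply_apply ha hw₀)
  have hv_ne : v ≠ φ none := hv.ne_of_inward hu
  have hbelow : φ none ≺ v :=
    root_properAncestor_of_branch_eq h (I.branch_ne_none hu) hub.symm hv_ne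
  have := I.inward_lt hu (I.inward_apply_of_outward hv) (hbelow.trans hv)
  rw [hul, I.layer_apply] at this
  exact this.asymm hlayer

theorem swap_mul (I : IsLayered φ layer) (h : trel a (φ a)) :
    IsLayered (swap (φ a) (φ (φ a)) * φ) layer := by
  have ha : Outward φ a := h.properAncestor
  have hout {v} := I.outward_swap_mul_iff ha (v := v)
  have hin {v} := I.inward_swap_mul_iff ha (v := v)
  refine ⟨fun v w hv hw => ?_, fun v hv => I.branch_ne_none (hin.1 hv).1,
    fun v w hv hw => I.inward_lt (hin.1 hv).1 (hin.1 hw).1,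
    fun v w hv hw => I.outward_properAncestor (hout.1 hv).1 (hout.1 hw).1,
    fun v hv hv₀ => ?_,
    fun v w hv hw => I.swap_mul_outward_apply ha (hout.1 hv).1 (hin.1 hw).1 (hin.1 hw).2,
    fun w hw => I.swap_mul_exists_inward_of_forall_ne ha (hin.1 hw).1 (hin.1 hw).2,
    fun v w hv hw =>
      I.swap_mul_exists_inward_of_lt h (hout.1 hv).1 (hout.1 hw).1 (hout.1 hw).2⟩
  · obtain ⟨hv, hva⟩ := Equiv.Perm.ne_and_ne_of_swap_mul_apply_ne_self hv
    obtain ⟨hw, hwa⟩ := Equiv.Perm.ne_and_ne_of_swap_mul_apply_ne_self hw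
    rw [sameCycle_swap_mul_iff (φ.injective.ne ha.apply_ne) hva hwa, I.sameCycle_iff hv hw]
  · have hvφ := (hout.1 hv).1
    have h₂ : φ (φ v) = v := I.apply_apply hvφ hv₀
    have hva : v ≠ a := by
      rintro rfl
      exact (hout.1 hv).2 rfl h₂
    have hv' : v ≠ φ a := hvφ.ne_of_inward (I.inward_apply_of_outward ha)
    have hφv : φ v ≠ a := fun e => hv' (by rw [← e, h₂])
    rw [swap_mul_apply_of_ne hva hv', swap_mul_apply_of_ne hφv (φ.injective.ne hva), h₂]

end HappySwap

/-! ### Symmetric shoves -/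

theorem conj (I : IsLayered φ layer) (hbranch : ∀ v, branch (s v) = branch v)
    (hnone : s none = none)
    (hprec : ∀ v w, φ v ≠ v → φ w ≠ w → (s v ≺ s w ↔ v ≺ w)) :
    IsLayered (s * φ * s⁻¹) (layer ∘ ⇑s⁻¹) := by
  have hinv (v) : s⁻¹ (s v) = v := s.symm_apply_apply v
  have hlayer (v) : (layer ∘ ⇑s⁻¹) (s v) = layer v := congrArg layer (hinv v)
  have hcenter (v) : s v = none ↔ v = none :=
    ⟨fun h => s.injective (h.trans hnone.symm), fun h => h ▸ hnone⟩
  have hout {v} := outward_conj_iff hprec (v := v)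
  have hin {v} := inward_conj_iff hprec (v := v)
  constructor <;> intro v
  all_goals obtain ⟨v, rfl⟩ := s.surjective v
  case branch_ne_none =>
    rw [hin, hbranch]
    exact fun hv => I.branch_ne_none hv
  case apply_apply =>
    rw [hout, Ne, hcenter, conj_apply_apply, conj_apply_apply, s.injective.eq_iff]
    exact fun hv => I.apply_apply hv
  case exists_inward_of_forall_ne =>
    simp only [hin, hlayer]
    intro hv hno j
    obtain ⟨u, hu, hul, hub⟩ :=
      I.exists_inward_of_forall_ne hv (fun x hx => hlayer x ▸ hno (s x) (hout.2 hx)) j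
    exact ⟨s u, hin.2 hu, (hlayer u).trans hul, (hbranch u).trans hub⟩
  all_goals
    intro w
    obtain ⟨w, rfl⟩ := s.surjective w
    simp only [hin, hout, hlayer, conj_apply_apply, hbranch, hcenter, ne_eq]
  case sameCycle_iff =>
    rw [Equiv.Perm.sameCycle_conj, hinv, hinv, s.injective.eq_iff, s.injective.eq_iff]
    exact fun hv hw => I.sameCycle_iff hv hw
  case inward_lt =>
    exact fun hv hw h => I.inward_lt hv hw ((hprec v w hv.1 hw.1).1 h)
  case outward_properAncestor =>
    exact fun hv hw hlt =>
      (hprec w v hw.apply_ne hv.apply_ne).2 (I.outward_properAncestor hv hw hlt)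
  case outward_apply => exact fun hv hw => I.outward_apply hv hw
  case exists_inward_of_lt =>
    intro hv hw hlt hv₀
    obtain ⟨u, hu, hul, hub⟩ := I.exists_inward_of_lt hv hw hlt hv₀
    exact ⟨s u, hin.2 hu, (hlayer u).trans hul, (hbranch u).trans hub⟩

theorem shove_of_ne_none (I : IsLayered φ layer) (h : trel a c) (ha : a ≠ none)
    (hfix : φ a = a ∨ φ c = c) :
    IsLayered (shove φ a c) (layer ∘ swap a c) := by
  refine I.conj (h.branch_swap ha) (swap_apply_of_ne_of_ne ha.symm h.ne_none.symm)
    fun v w hv hw => h.swap_properAncestor_swap_iff ha ?_ ?_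
  · rintro ⟨rfl, rfl⟩
    exact hfix.elim hv hw
  · rintro ⟨rfl, rfl⟩
    exact hfix.elim hw hv

theorem sameCycle_shove_iff (I : IsLayered φ layer) (hv : shove φ a c v ≠ v)
    (hw : shove φ a c w ≠ w) :
    (shove φ a c).SameCycle v w ↔ (layer ∘ swap a c) v = (layer ∘ swap a c) w := by
  have unhappy {v} (hv : shove φ a c v ≠ v) : φ (swap a c v) ≠ swap a c v := by
    rwa [shove_apply, Ne, Equiv.swap_apply_eq_iff] at hv
  rw [shove, Equiv.Perm.sameCycle_conj, Equiv.swap_inv]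
  exact I.sameCycle_iff (unhappy hv) (unhappy hw)

section ShoveIntoCenter

theorem outward_shove_into_center_iff (h : trel none a) (h₀ : φ none = none)
    (ha : Inward φ a) : Outward (shove φ none a) v ↔ v = none ∨ Outward φ v := by
  by_cases hv₀ : v = none
  · subst hv₀
    simp only [outward_none_iff, shove_apply, swap_apply_left, true_or, iff_true, ne_eq,
      Equiv.swap_apply_eq_iff]
    exact ha.1
  by_cases hva : v = a
  · subst hva
    simp only [Outward, shove_apply, swap_apply_right, h₀, swap_apply_left, hv₀, false_or,
      not_properAncestor_self, ha.2]
  simp only [Outward, shove_apply, swap_apply_of_ne_of_ne hv₀ hva, hv₀, false_or]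
  by_cases hφv : φ v = a
  · rw [hφv, swap_apply_right]
    exact iff_of_false (not_properAncestor_none v)
      fun hva' => hv₀ (eq_none_of_properAncestor_root h hva')
  · have hφv₀ : φ v ≠ none := fun e => hv₀ (φ.injective (e.trans h₀.symm))
    rw [swap_apply_of_ne_of_ne hφv₀ hφv]

theorem inward_shove_into_center_iff (h : trel none a) (h₀ : φ none = none)
    (ha : Inward φ a) : Inward (shove φ none a) v ↔ Inward φ v ∧ v ≠ a := by
  by_cases hv₀ : v = none
  · exact iff_of_false (fun h => h.ne_none hv₀) fun h => h.1.ne_none hv₀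
  have hout : v ≺ shove φ none a v ↔ v ≺ φ v :=
    (outward_shove_into_center_iff h h₀ ha).trans (or_iff_right hv₀)
  rw [Inward, hout, Inward, shove_apply, Ne, Equiv.swap_apply_eq_iff]
  by_cases hva : v = a
  · simp only [hva, swap_apply_right, h₀, ne_eq, not_true_eq_false, false_and, and_false]
  · simp only [swap_apply_of_ne_of_ne hv₀ hva, hva, not_false_eq_true, and_true, ne_eq]

theorem layer_lt_of_outward (I : IsLayered φ layer) (h : trel none a) (h₀ : φ none = none)
    (ha : Inward φ a) (hv : Outward φ v) : layer v < layer a := by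
  have not_above {u} (hu : u ≠ none) : ¬ u ≺ a :=
    fun hua => hu (eq_none_of_properAncestor_root h hua)
  have hv₀ : v ≠ none := hv.ne_none h₀
  refine lt_of_not_ge fun hle => ?_
  rcases hle.eq_or_lt with heq | hlt
  · rcases I.eq_or_eq_apply hv.apply_ne ha.1 (I.apply_apply hv hv₀) heq.symm with rfl | rfl
    exacts [hv.not_inward ha, not_above hv₀ hv]
  · obtain ⟨hout, hne⟩ := I.outward_apply hv ha hlt
    have h₂ : φ (φ a) = a := φ.injective (I.apply_apply hout hne)
    rw [Outward, h₂] at hout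
    exact not_above hne hout

theorem branch_ne_of_outward (I : IsLayered φ layer) (h : trel none a) (h₀ : φ none = none)
    (ha : Inward φ a) (hv : Outward φ v) : branch v ≠ branch a := by
  intro hbranch
  have hva : v ≠ a := hv.ne_of_inward ha
  have hav : a ≺ v := root_properAncestor_of_branch_eq h (I.branch_ne_none ha) hbranch hva
  have hlt := I.inward_lt ha (I.inward_apply_of_outward hv) (hav.trans hv)
  rw [I.layer_apply] at hlt
  exact hlt.asymm (I.layer_lt_of_outward h h₀ ha hv)

theorem outward_apply_of_layer_lt (I : IsLayered φ layer) (h : trel none a) (h₀ : φ none = none)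
    (ha : Inward φ a) (hw : Inward φ w) (hlt : layer w < layer a) : Outward φ (φ w) := by
  obtain ⟨v, hv, hvw⟩ : ∃ v, Outward φ v ∧ layer v = layer w := by
    by_contra! hno
    obtain ⟨j, hj⟩ := Option.ne_none_iff_exists'.1 (I.branch_ne_none ha)
    obtain ⟨u, hu, hul, hub⟩ := I.exists_inward_of_forall_ne hw hno j
    have hua : u ≠ a := by
      rintro rfl
      exact hlt.ne' hul
    have hau : a ≺ u :=
      root_properAncestor_of_branch_eq h (I.branch_ne_none ha) (hub.trans hj.symm) hua
    exact (I.inward_lt ha hu hau).not_gt (hul ▸ hlt)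
  have hv₀ : v ≠ none := hv.ne_none h₀
  have h₂ := I.apply_apply hv hv₀
  rcases I.eq_or_eq_apply hv.apply_ne hw.1 h₂ hvw with rfl | rfl
  · exact absurd hw hv.not_inward
  · rwa [h₂]

theorem shove_into_center_apply_apply (I : IsLayered φ layer) (h : trel none a)
    (ha : Inward φ a) (hv : Outward φ v) (hv₀ : v ≠ none) :
    shove φ none a (shove φ none a v) = v := by
  have hva : v ≠ a := hv.ne_of_inward ha
  have h₂ := I.apply_apply hv hv₀
  have hφv₀ : φ v ≠ none := (I.inward_apply_of_outward hv).ne_none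
  have hφva : φ v ≠ a := fun e => hv₀ (eq_none_of_properAncestor_root h (e ▸ hv))
  simp only [shove_apply, swap_apply_of_ne_of_ne hv₀ hva, swap_apply_of_ne_of_ne hφv₀ hφva, h₂]

theorem layer_swap_of_outward (h₀ : φ none = none) (ha : Inward φ a)
    (hv : Outward φ v) : (layer ∘ swap none a) v = layer v :=
  congrArg layer (swap_apply_of_ne_of_ne (hv.ne_none h₀) (hv.ne_of_inward ha))

theorem layer_swap_of_inward (hv : Inward φ v) (hva : v ≠ a) :
    (layer ∘ swap none a) v = layer v :=
  congrArg layer (swap_apply_of_ne_of_ne hv.ne_none hva)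

theorem layer_swap_none : (layer ∘ swap none a) none = layer a :=
  congrArg layer (swap_apply_left none a)

theorem shove_into_center_outward_apply (I : IsLayered φ layer) (h : trel none a)
    (h₀ : φ none = none) (ha : Inward φ a) (hv : v = none ∨ Outward φ v) (hw : Inward φ w)
    (hwa : w ≠ a) (hlt : layer w < (layer ∘ swap none a) v) :
    Outward φ (shove φ none a w) ∧ shove φ none a w ≠ none := by
  have hwa_lt : layer w < layer a := by
    rcases hv with rfl | hv
    · rwa [layer_swap_none] at hlt
    · rw [layer_swap_of_outward h₀ ha hv] at hlt
      exact hlt.trans (I.layer_lt_of_outward h h₀ ha hv)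
  have hout := I.outward_apply_of_layer_lt h h₀ ha hw hwa_lt
  rw [shove_apply, swap_apply_of_ne_of_ne hw.ne_none hwa,
    swap_apply_of_ne_of_ne (hout.ne_none h₀) (hout.ne_of_inward ha)]
  exact ⟨hout, hout.ne_none h₀⟩

theorem shove_into_center_exists_inward_of_forall_ne (I : IsLayered φ layer)
    (h₀ : φ none = none) (ha : Inward φ a) (hw : Inward φ w)
    (hno : ∀ v, v = none ∨ Outward φ v → (layer ∘ swap none a) v ≠ layer w) (j : Fin b) :
    ∃ u, Inward φ u ∧ u ≠ a ∧ layer u = layer w ∧ branch u = some j := by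
  obtain ⟨u, hu, hul, hub⟩ := I.exists_inward_of_forall_ne hw
    (fun v hv => (layer_swap_of_outward h₀ ha hv).symm.trans_ne (hno v (.inr hv))) j
  refine ⟨u, hu, ?_, hul, hub⟩
  rintro rfl
  exact hno none (.inl rfl) (layer_swap_none.trans hul)

theorem shove_into_center_exists_inward_of_lt (I : IsLayered φ layer)
    (h : trel none a) (h₀ : φ none = none) (ha : Inward φ a) (hv : Outward φ v)
    (hw : w = none ∨ Outward φ w) (hlt : layer v < (layer ∘ swap none a) w) :
    ∃ u, Inward φ u ∧ u ≠ a ∧ layer u = (layer ∘ swap none a) w ∧ branch u = branch v := by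
  have hv₀ := hv.ne_none h₀
  rcases hw with rfl | hw
  · rw [layer_swap_none]
    obtain ⟨j, hj⟩ := Option.ne_none_iff_exists'.1 (ProperAncestor.branch_ne_none hv hv₀)
    obtain ⟨u, hu, hul, hub⟩ :=
      I.exists_inward_of_forall_ne ha (fun x hx => (I.layer_lt_of_outward h h₀ ha hx).ne) j
    refine ⟨u, hu, ?_, hul, hub.trans hj.symm⟩
    rintro rfl
    exact I.branch_ne_of_outward h h₀ ha hv (hj.trans hub.symm)
  · rw [layer_swap_of_outward h₀ ha hw] at hlt ⊢
    obtain ⟨u, hu, hul, hub⟩ := I.exists_inward_of_lt hv hw hlt hv₀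
    refine ⟨u, hu, ?_, hul, hub⟩
    rintro rfl
    exact (I.layer_lt_of_outward h h₀ ha hw).ne' hul

theorem shove_into_center (I : IsLayered φ layer) (h : trel none a) (h₀ : φ none = none)
    (ha : Inward φ a) : IsLayered (shove φ none a) (layer ∘ swap none a) := by
  have hlayer_out {v} (hv : Outward φ v) := layer_swap_of_outward (layer := layer) h₀ ha hv
  have hlayer_in {v} (hv : Inward φ v) (hva : v ≠ a) := layer_swap_of_inward (layer := layer) hv hva
  constructor
  case sameCycle_iff => exact fun v w hv hw => I.sameCycle_shove_iff hv hw
  all_goals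
    simp only [outward_shove_into_center_iff h h₀ ha, inward_shove_into_center_iff h h₀ ha]
  case branch_ne_none => exact fun v hv => I.branch_ne_none hv.1
  case inward_lt =>
    intro v w hv hw
    rw [hlayer_in hv.1 hv.2, hlayer_in hw.1 hw.2]
    exact I.inward_lt hv.1 hw.1
  case outward_properAncestor =>
    rintro v w (rfl | hv) (rfl | hw) hlt
    · exact absurd rfl hlt.ne
    · rw [layer_swap_none, hlayer_out hw] at hlt
      exact absurd (I.layer_lt_of_outward h h₀ ha hw) hlt.asymm
    · exact none_properAncestor_iff.2 (hv.ne_none h₀)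
    · rw [hlayer_out hv, hlayer_out hw] at hlt
      exact I.outward_properAncestor hv hw hlt
  case apply_apply =>
    exact fun v hv hv₀ => I.shove_into_center_apply_apply h ha (hv.resolve_left hv₀) hv₀
  case outward_apply =>
    rintro v w hv ⟨hw, hwa⟩ hlt
    rw [hlayer_in hw hwa] at hlt
    exact (I.shove_into_center_outward_apply h h₀ ha hv hw hwa hlt).imp_left .inr
  case exists_inward_of_forall_ne =>
    rintro w ⟨hw, hwa⟩ hno j
    rw [hlayer_in hw hwa] at hno ⊢
    obtain ⟨u, hu, hua, hul, hub⟩ :=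
      I.shove_into_center_exists_inward_of_forall_ne h₀ ha hw hno j
    exact ⟨u, ⟨hu, hua⟩, (hlayer_in hu hua).trans hul, hub⟩
  case exists_inward_of_lt =>
    intro v w hv hw hlt hv₀
    replace hv := hv.resolve_left hv₀
    rw [hlayer_out hv] at hlt
    obtain ⟨u, hu, hua, hul, hub⟩ :=
      I.shove_into_center_exists_inward_of_lt h h₀ ha hv hw hlt
    exact ⟨u, ⟨hu, hua⟩, (hlayer_in hu hua).trans hul, hub⟩

end ShoveIntoCenter

section ShoveOutOfCenter

theorem properAncestor_apply_none (h : trel none c) (hc : φ c = c)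
    (hφ : φ none ∈ subtree c) : c ≺ φ none :=
  hφ.resolve_left fun e => h.ne_none (φ.injective (hc.trans e.symm))

theorem apply_apply_none (I : IsLayered φ layer) (h : trel none c) (hc : φ c = c)
    (hφ : φ none ∈ subtree c) (hφ' : φ⁻¹ none ∈ subtree c) : φ (φ none) = none := by
  have hcw : c ≺ φ none := properAncestor_apply_none h hc hφ
  have hcu : c ≺ φ⁻¹ none :=
    properAncestor_apply_none h (Equiv.Perm.inv_eq_iff_eq.2 hc.symm) hφ'
  have hu_ne : φ⁻¹ none ≠ none := fun e => not_properAncestor_none c (e ▸ hcu)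
  have hφu : φ (φ⁻¹ none) = none := φ.apply_symm_apply none
  have hu : Inward φ (φ⁻¹ none) := by
    simpa only [Inward, hφu, not_properAncestor_none, not_false_eq_true, and_true] using hu_ne.symm
  have hw : Inward φ (φ none) :=
    I.inward_apply_of_outward <|
      none_properAncestor_iff.2 fun e => not_properAncestor_none c (e ▸ hcw)
  have hlayer : layer (φ⁻¹ none) = layer (φ none) := by
    rw [I.layer_apply, ← I.layer_apply (φ⁻¹ none), hφu]
  have hbranch : branch (φ⁻¹ none) = branch (φ none) :=
    (hcu.branch_eq h.ne_none).symm.trans (hcw.branch_eq h.ne_none)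
  suffices e : φ⁻¹ none = φ none by rw [← e, hφu]
  by_contra hne
  rcases properAncestor_or_of_branch_eq hbranch (I.branch_ne_none hu) hne with hlt | hlt
  exacts [(I.inward_lt hu hw hlt).ne hlayer, (I.inward_lt hw hu hlt).ne' hlayer]

theorem shove_apply_of_ne (hc : φ c = c) (h₂ : φ (φ none) = none) (hv₀ : v ≠ none)
    (hvc : v ≠ c) (hvw : v ≠ φ none) : shove φ none c v = φ v := by
  rw [shove_apply, swap_apply_of_ne_of_ne hv₀ hvc, swap_apply_of_ne_of_ne]
  · exact fun e => hvw (φ.injective (e.trans h₂.symm))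
  · exact fun e => hvc (φ.injective (e.trans hc.symm))

theorem shove_out_of_center_apply_child (hcw : c ≺ φ none) :
    shove φ none c c = φ none := by
  rw [shove_apply, swap_apply_right, swap_apply_of_ne_of_ne _ hcw.ne.symm]
  exact fun e => not_properAncestor_none c (e ▸ hcw)

theorem shove_out_of_center_apply_partner (hcw : c ≺ φ none) (h₂ : φ (φ none) = none) :
    shove φ none c (φ none) = c := by
  rw [shove_apply, swap_apply_of_ne_of_ne _ hcw.ne.symm, h₂, swap_apply_left]
  exact fun e => not_properAncestor_none c (e ▸ hcw)

theorem outward_shove_out_of_center_iff (h : trel none c) (hc : φ c = c) (hcw : c ≺ φ none)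
    (h₂ : φ (φ none) = none) :
    Outward (shove φ none c) v ↔ v = c ∨ Outward φ v ∧ v ≠ none := by
  by_cases hvc : v = c
  · subst hvc
    simpa only [Outward, shove_out_of_center_apply_child hcw, true_or, iff_true] using hcw
  by_cases hv₀ : v = none
  · subst hv₀
    simp only [Outward, shove_apply, swap_apply_left, hc, swap_apply_right,
      not_properAncestor_self, hvc, ne_eq, not_true_eq_false, and_false, or_false]
  by_cases hvw : v = φ none
  · subst hvw
    simp only [Outward, shove_out_of_center_apply_partner hcw h₂, hcw.asymm, hvc, h₂,
      not_properAncestor_none, false_and, or_false]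
  · simp only [Outward, shove_apply_of_ne hc h₂ hv₀ hvc hvw, hvc, hv₀, ne_eq, not_false_eq_true,
      and_true, false_or]

theorem inward_shove_out_of_center_iff (h : trel none c) (hc : φ c = c) (hcw : c ≺ φ none)
    (h₂ : φ (φ none) = none) : Inward (shove φ none c) v ↔ Inward φ v := by
  by_cases hv₀ : v = none
  · exact iff_of_false (fun h => h.ne_none hv₀) fun h => h.ne_none hv₀
  by_cases hvc : v = c
  · subst hvc
    have hout := (outward_shove_out_of_center_iff h hc hcw h₂).2 (.inl rfl)
    exact iff_of_false hout.not_inward fun h => h.1 hc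
  by_cases hvw : v = φ none
  · subst hvw
    simp only [Inward, shove_out_of_center_apply_partner hcw h₂, h₂, not_properAncestor_none,
      hcw.asymm, ne_eq, Ne.symm hvc, Ne.symm hv₀]
  · simp only [Inward, shove_apply_of_ne hc h₂ hv₀ hvc hvw]

theorem layer_lt_layer_none (I : IsLayered φ layer) (h₀ : Outward φ none) (hv : Outward φ v)
    (hv₀ : v ≠ none) : layer v < layer none := by
  refine lt_of_not_ge fun hle => ?_
  rcases hle.eq_or_lt with heq | hlt
  · exact hv₀ (I.outward_injOn_layer h₀ hv heq).symm
  · exact not_properAncestor_none v (I.outward_properAncestor h₀ hv hlt)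

theorem layer_le_layer_none (I : IsLayered φ layer) (h₀ : Outward φ none) (hv : Outward φ v) :
    layer v ≤ layer none := by
  by_cases hv₀ : v = none
  · rw [hv₀]
  · exact (I.layer_lt_layer_none h₀ hv hv₀).le

theorem eq_apply_none_of_inward (I : IsLayered φ layer) (h₀ : Outward φ none)
    (h₂ : φ (φ none) = none) (hv : Inward φ v) (hlayer : layer v = layer none) : v = φ none :=
  (I.eq_or_eq_apply h₀.apply_ne hv.1 h₂ hlayer.symm).resolve_left hv.ne_none

theorem child_properAncestor_of_outward (I : IsLayered φ layer) (h : trel none c) (hc : φ c = c)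
    (h₀ : Outward φ none) (hcw : c ≺ φ none) (h₂ : φ (φ none) = none) (hv : Outward φ v)
    (hv₀ : v ≠ none) : c ≺ v := by
  obtain ⟨u, hu, hul, hub⟩ :=
    I.exists_inward_of_lt hv h₀ (I.layer_lt_layer_none h₀ hv hv₀) hv₀
  obtain rfl := I.eq_apply_none_of_inward h₀ h₂ hu hul
  refine root_properAncestor_of_branch_eq h (hcw.branch_ne_none h.ne_none) ?_ ?_
  · rw [← hub, hcw.branch_eq h.ne_none]
  · rintro rfl
    exact hv.apply_ne hc

theorem shove_out_of_center_apply_apply (I : IsLayered φ layer) (hc : φ c = c)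
    (h₀ : Outward φ none) (h₂ : φ (φ none) = none) (hv : Outward φ v) (hv₀ : v ≠ none) :
    shove φ none c (shove φ none c v) = v := by
  have hφv := I.apply_apply hv hv₀
  have hvc : v ≠ c := by
    rintro rfl
    exact hv.apply_ne hc
  have hvw : v ≠ φ none := hv.ne_of_inward (I.inward_apply_of_outward h₀)
  rw [shove_apply_of_ne hc h₂ hv₀ hvc hvw, shove_apply_of_ne hc h₂, hφv]
  · exact fun e => hvw (φ.injective (e.trans h₂.symm))
  · exact fun e => hvc (φ.injective (e.trans hc.symm))
  · exact φ.injective.ne hv₀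

theorem layer_swap_child : (layer ∘ swap none c) c = layer none :=
  congrArg layer (swap_apply_right none c)

theorem layer_swap_of_apply_ne (hc : φ c = c) (hv : φ v ≠ v) (hv₀ : v ≠ none) :
    (layer ∘ swap none c) v = layer v :=
  congrArg layer (swap_apply_of_ne_of_ne hv₀ fun e => hv (e ▸ hc))

theorem exists_outward_layer_eq_layer_swap (hc : φ c = c) (h₀ : Outward φ none)
    (hv : v = c ∨ Outward φ v ∧ v ≠ none) :
    ∃ u, Outward φ u ∧ layer u = (layer ∘ swap none c) v := by
  rcases hv with rfl | ⟨hv, hv₀⟩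
  exacts [⟨none, h₀, layer_swap_child.symm⟩,
    ⟨v, hv, (layer_swap_of_apply_ne hc hv.apply_ne hv₀).symm⟩]

theorem shove_out_of_center_outward_properAncestor (I : IsLayered φ layer)
    (h : trel none c) (hc : φ c = c) (hcw : c ≺ φ none) (h₂ : φ (φ none) = none)
    (h₀ : Outward φ none) (hv : v = c ∨ Outward φ v ∧ v ≠ none)
    (hw : w = c ∨ Outward φ w ∧ w ≠ none)
    (hlt : (layer ∘ swap none c) v < (layer ∘ swap none c) w) : w ≺ v := by
  rcases hv with rfl | ⟨hv, hv₀⟩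
  · obtain ⟨u, hu, hlayer⟩ := exists_outward_layer_eq_layer_swap hc h₀ hw
    rw [layer_swap_child, ← hlayer] at hlt
    exact absurd (I.layer_le_layer_none h₀ hu) hlt.not_ge
  rcases hw with rfl | ⟨hw, hw₀⟩
  · exact I.child_properAncestor_of_outward h hc h₀ hcw h₂ hv hv₀
  · rw [layer_swap_of_apply_ne hc hv.apply_ne hv₀, layer_swap_of_apply_ne hc hw.apply_ne hw₀] at hlt
    exact I.outward_properAncestor hv hw hlt

theorem shove_out_of_center_outward_apply (I : IsLayered φ layer) (h : trel none c)
    (hc : φ c = c) (hcw : c ≺ φ none) (h₂ : φ (φ none) = none) (hv : Outward φ v)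
    (hw : Inward φ w) (hlt : layer w < layer v) :
    (shove φ none c w = c ∨ Outward φ (shove φ none c w) ∧ shove φ none c w ≠ none) ∧
      shove φ none c w ≠ none := by
  by_cases hw_eq : w = φ none
  · rw [hw_eq, shove_out_of_center_apply_partner hcw h₂]
    exact ⟨.inl rfl, h.ne_none⟩
  · have hwc : w ≠ c := by
      rintro rfl
      exact hw.1 hc
    rw [shove_apply_of_ne hc h₂ hw.ne_none hwc hw_eq]
    have hout := I.outward_apply hv hw hlt
    exact ⟨.inr hout, hout.2⟩

theorem shove_out_of_center_exists_inward_of_forall_ne (I : IsLayered φ layer)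
    (hc : φ c = c) (hw : Inward φ w)
    (hno : ∀ v, v = c ∨ Outward φ v ∧ v ≠ none → (layer ∘ swap none c) v ≠ layer w) (j : Fin b) :
    ∃ u, Inward φ u ∧ layer u = layer w ∧ branch u = some j := by
  refine I.exists_inward_of_forall_ne hw (fun v hv => ?_) j
  by_cases hv₀ : v = none
  · rw [hv₀]
    exact layer_swap_child.symm.trans_ne (hno c (.inl rfl))
  · exact (layer_swap_of_apply_ne hc hv.apply_ne hv₀).symm.trans_ne (hno v (.inr ⟨hv, hv₀⟩))

theorem shove_out_of_center_exists_inward_of_lt (I : IsLayered φ layer)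
    (hc : φ c = c) (h₀ : Outward φ none) (hv : v = c ∨ Outward φ v ∧ v ≠ none)
    (hw : w = c ∨ Outward φ w ∧ w ≠ none)
    (hlt : (layer ∘ swap none c) v < (layer ∘ swap none c) w) :
    ∃ u, Inward φ u ∧ layer u = (layer ∘ swap none c) w ∧ branch u = branch v := by
  obtain ⟨x, hx, hlayer⟩ := exists_outward_layer_eq_layer_swap hc h₀ hw
  rw [← hlayer] at hlt ⊢
  rcases hv with rfl | ⟨hv, hv₀⟩
  · rw [layer_swap_child] at hlt
    exact absurd (I.layer_le_layer_none h₀ hx) hlt.not_ge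
  · rw [layer_swap_of_apply_ne hc hv.apply_ne hv₀] at hlt
    exact I.exists_inward_of_lt hv hx hlt hv₀

theorem shove_out_of_center (I : IsLayered φ layer) (h : trel none c) (hc : φ c = c)
    (hφ : φ none ∈ subtree c) (hφ' : φ⁻¹ none ∈ subtree c) :
    IsLayered (shove φ none c) (layer ∘ swap none c) := by
  have hcw : c ≺ φ none := properAncestor_apply_none h hc hφ
  have h₂ : φ (φ none) = none := I.apply_apply_none h hc hφ hφ'
  have h₀ : Outward φ none :=
    none_properAncestor_iff.2 fun e => not_properAncestor_none c (e ▸ hcw)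
  have hlayer {v} (hv : Inward φ v) : (layer ∘ swap none c) v = layer v :=
    layer_swap_of_apply_ne hc hv.1 hv.ne_none
  constructor
  case sameCycle_iff => exact fun v w hv hw => I.sameCycle_shove_iff hv hw
  all_goals
    simp only [outward_shove_out_of_center_iff h hc hcw h₂,
      inward_shove_out_of_center_iff h hc hcw h₂]
  case branch_ne_none => exact I.branch_ne_none
  case inward_lt =>
    intro v w hv hw
    rw [hlayer hv, hlayer hw]
    exact I.inward_lt hv hw
  case outward_properAncestor =>
    exact fun v w => I.shove_out_of_center_outward_properAncestor h hc hcw h₂ h₀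
  case apply_apply =>
    rintro v (rfl | ⟨hv, hv₀⟩) -
    · rw [shove_out_of_center_apply_child hcw, shove_out_of_center_apply_partner hcw h₂]
    · exact I.shove_out_of_center_apply_apply hc h₀ h₂ hv hv₀
  case outward_apply =>
    intro v w hv hw hlt
    obtain ⟨u, hu, hlayer_u⟩ := exists_outward_layer_eq_layer_swap hc h₀ hv
    rw [← hlayer_u, hlayer hw] at hlt
    exact I.shove_out_of_center_outward_apply h hc hcw h₂ hu hw hlt
  case exists_inward_of_forall_ne =>
    intro w hw hno j
    rw [hlayer hw] at hno ⊢
    obtain ⟨u, hu, hul, hub⟩ := I.shove_out_of_center_exists_inward_of_forall_ne hc hw hno j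
    exact ⟨u, hu, (hlayer hu).trans hul, hub⟩
  case exists_inward_of_lt =>
    intro v w hv hw hlt _
    obtain ⟨u, hu, hul, hub⟩ := I.shove_out_of_center_exists_inward_of_lt hc h₀ hv hw hlt
    exact ⟨u, hu, (hlayer hu).trans hul, hub⟩

end ShoveOutOfCenter

end IsLayered

/-! ### The initial state and the steps of the algorithm -/

/-- The distance from the center of a branch vertex, less one, and zero elsewhere. It separates
the nontrivial cycles of `piT b k`. -/
def level : TV b k → ℕ
  | some (Sum.inl (_, i)) => i
  | _ => 0

theorem not_outward_piT (v : TV b k) : ¬ Outward (piT b k) v := by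
  rcases v with _ | _ | _ <;> simp [Outward, piT, ProperAncestor]

theorem sameCycle_piT (j j' : Fin b) (i : Fin k) :
    (piT b k).SameCycle (some (Sum.inl (j, i))) (some (Sum.inl (j', i))) :=
  sameCycle_induction (P := fun j' => (piT b k).SameCycle _ (some (Sum.inl (j', i))))
    (sameCycle_finRotate j j') (.refl _ _) fun _ h => h.apply_right

theorem level_eq_of_sameCycle_piT (h : (piT b k).SameCycle v w) : level v = level w :=
  sameCycle_induction (P := fun w => level v = level w) h rfl fun w hw => hw.trans <| by
    rcases w with _ | ⟨j, i⟩ | l <;> rfl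

theorem exists_eq_of_piT_apply_ne (h : piT b k v ≠ v) :
    ∃ j i, v = some (Sum.inl (j, i)) := by
  rcases v with _ | ⟨j, i⟩ | l
  exacts [absurd rfl h, ⟨j, i, rfl⟩, absurd rfl h]

theorem isLayered_piT : IsLayered (piT b k) level where
  sameCycle_iff v w hv hw := by
    refine ⟨level_eq_of_sameCycle_piT, fun h => ?_⟩
    obtain ⟨j, i, rfl⟩ := exists_eq_of_piT_apply_ne hv
    obtain ⟨j', i', rfl⟩ := exists_eq_of_piT_apply_ne hw
    obtain rfl : i = i' := Fin.ext h
    exact sameCycle_piT j j' i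
  branch_ne_none v hv := by
    obtain ⟨j, i, rfl⟩ := exists_eq_of_piT_apply_ne hv.1
    exact Option.some_ne_none j
  inward_lt v w hv hw h := by
    obtain ⟨j, i, rfl⟩ := exists_eq_of_piT_apply_ne hv.1
    obtain ⟨j', i', rfl⟩ := exists_eq_of_piT_apply_ne hw.1
    exact h.2
  outward_properAncestor v _ hv := absurd hv (not_outward_piT v)
  apply_apply v hv := absurd hv (not_outward_piT v)
  outward_apply v _ hv := absurd hv (not_outward_piT v)
  exists_inward_of_forall_ne w hw _ j' := by
    obtain ⟨j, i, rfl⟩ := exists_eq_of_piT_apply_ne hw.1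
    have moved : piT b k (some (Sum.inl (j', i))) ≠ some (Sum.inl (j', i)) := fun e =>
      hw.1 ((sameCycle_piT j j' i).apply_eq_self_iff.2 e)
    exact ⟨some (Sum.inl (j', i)), ⟨moved, not_outward_piT _⟩, rfl, rfl⟩
  exists_inward_of_lt v _ hv := absurd hv (not_outward_piT v)

theorem card_support_piT_le : (piT b k).support.card ≤ b * k := by
  let vertex : Fin b × Fin k → TV b k := fun x => some (Sum.inl x)
  have hsub : (piT b k).support ⊆ Finset.univ.image vertex := fun v hv => by
    obtain ⟨j, i, rfl⟩ := exists_eq_of_piT_apply_ne (Equiv.Perm.mem_support.1 hv)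
    exact Finset.mem_image_of_mem vertex (Finset.mem_univ (j, i))
  calc (piT b k).support.card
    _ ≤ (Finset.univ.image vertex).card := Finset.card_le_card hsub
    _ ≤ (Finset.univ : Finset (Fin b × Fin k)).card := Finset.card_image_le
    _ = b * k := by rw [Finset.card_univ, Fintype.card_prod, Fintype.card_fin, Fintype.card_fin]

/-- The partner permutation of a state `(p, q)`: it sends each vertex `v` to the vertex holding
the destination token of the token at `v`. -/
def partner (st : Equiv.Perm (TV b k) × Equiv.Perm (TV b k)) : Equiv.Perm (TV b k) :=
  st.2 * st.1⁻¹

namespace IsLayered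

theorem mul_swap_of_trel (I : IsLayered φ layer) (h : trel a c) (ha : φ a ∈ subtree c)
    (hc : φ c ∉ subtree c) :
    IsLayered (φ * swap a c) layer ∧ (φ * swap a c).support.card < φ.support.card := by
  obtain rfl : φ a = c := I.apply_eq_of_trel h ha hc
  have hne : φ (φ a) ≠ φ a := fun e => hc (.inl e)
  rw [Equiv.mul_swap_eq_swap_mul]
  exact ⟨I.swap_mul h, Equiv.Perm.card_support_swap_mul hne⟩

theorem mul_swap (I : IsLayered φ layer) (h : (TGraph b k).Adj a c)
    (ha : (TGraph b k).dist c (φ a) < (TGraph b k).dist a (φ a))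
    (hc : (TGraph b k).dist a (φ c) < (TGraph b k).dist c (φ c)) :
    IsLayered (φ * swap a c) layer ∧ (φ * swap a c).support.card < φ.support.card := by
  rcases TGraph_adj.1 h with h | h
  · exact I.mul_swap_of_trel h (h.mem_subtree_of_dist_lt ha) (h.notMem_subtree_of_dist_lt hc)
  · rw [Equiv.swap_comm]
    exact I.mul_swap_of_trel h (h.mem_subtree_of_dist_lt hc) (h.notMem_subtree_of_dist_lt ha)

theorem exists_shove (I : IsLayered φ layer) (h : (TGraph b k).Adj a c) (hc : φ c = c)
    (ha : (TGraph b k).dist c (φ a) < (TGraph b k).dist a (φ a))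
    (ha' : (TGraph b k).dist c (φ⁻¹ a) < (TGraph b k).dist a (φ⁻¹ a)) :
    ∃ layer', IsLayered (shove φ a c) layer' := by
  rcases TGraph_adj.1 h with h | h
  · rcases eq_or_ne a none with rfl | ha₀
    · exact ⟨_, I.shove_out_of_center h hc (h.mem_subtree_of_dist_lt ha)
        (h.mem_subtree_of_dist_lt ha')⟩
    · exact ⟨_, I.shove_of_ne_none h ha₀ (.inr hc)⟩
  · rw [shove_comm]
    rcases eq_or_ne c none with rfl | hc₀
    · exact ⟨_, I.shove_into_center h hc (inward_of_notMem_subtree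
        (h.notMem_subtree_of_dist_lt ha))⟩
    · exact ⟨_, I.shove_of_ne_none h hc₀ (.inl hc)⟩

variable {st st' : Equiv.Perm (TV b k) × Equiv.Perm (TV b k)}

theorem happySwapStep (I : IsLayered (partner st) layer)
    (h : HappySwapStep (TGraph b k) st st') :
    IsLayered (partner st') layer ∧ (partner st').support.card < (partner st).support.card := by
  obtain ⟨a, c, hac, ⟨-, ha⟩, ⟨-, hc⟩, hp, hq⟩ := h
  have hpartner : partner st' = partner st * swap a c := by
    rw [partner, partner, hp, hq]
    rfl
  simp only [Equiv.apply_symm_apply] at ha hc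
  rw [hpartner]
  exact I.mul_swap hac ha hc

theorem happyDestStep (I : IsLayered (partner st) layer)
    (h : HappyDestStep (TGraph b k) st st') :
    IsLayered (partner st') layer ∧ (partner st').support.card < (partner st).support.card := by
  obtain ⟨a, c, hac, ⟨-, ha⟩, ⟨-, hc⟩, hq, hp⟩ := h
  have hpartner : partner st' = ((partner st)⁻¹ * swap a c)⁻¹ := by
    rw [mul_inv_rev, inv_inv, Equiv.swap_inv, partner, partner, hp, hq]
    rfl
  simp only [Equiv.apply_symm_apply] at ha hc
  obtain ⟨I', hlt⟩ := I.inv.mul_swap hac ha hc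
  rw [hpartner]
  exact ⟨I'.inv, by rwa [Equiv.Perm.support_inv, ← Equiv.Perm.support_inv (partner st)]⟩

theorem shoveStep (I : IsLayered (partner st) layer) (h : ShoveStep (TGraph b k) st st') :
    (∃ layer', IsLayered (partner st') layer') ∧
      (partner st').support.card = (partner st).support.card := by
  obtain ⟨a, c, hac, hc, ⟨-, ha⟩, ⟨-, ha'⟩, hp, hq⟩ := h
  have hpartner : partner st' = shove (partner st) a c := by
    rw [shove, partner, partner, hp, hq]
    rfl
  have hfix : partner st c = c := by
    rw [partner, Equiv.Perm.mul_apply, Equiv.Perm.inv_def, hc, Equiv.apply_symm_apply]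
  simp only [Equiv.apply_symm_apply] at ha ha'
  rw [hpartner]
  exact ⟨I.exists_shove hac hfix ha ha', card_support_shove⟩

theorem card_support_lt (I : IsLayered (partner st) layer)
    (h : HappySwapStep (TGraph b k) st st' ∨ HappyDestStep (TGraph b k) st st') :
    (partner st').support.card < (partner st).support.card :=
  h.elim (fun h => (I.happySwapStep h).2) fun h => (I.happyDestStep h).2

theorem step (I : IsLayered (partner st) layer)
    (h : HappySwapStep (TGraph b k) st st' ∨ HappyDestStep (TGraph b k) st st' ∨
      ShoveStep (TGraph b k) st st') :
    (∃ layer', IsLayered (partner st') layer') ∧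
      (partner st').support.card ≤ (partner st).support.card := by
  rcases h with h | h | h
  · exact (I.happySwapStep h).imp (⟨layer, ·⟩) le_of_lt
  · exact (I.happyDestStep h).imp (⟨layer, ·⟩) le_of_lt
  · exact (I.shoveStep h).imp_right le_of_eq

end IsLayered

open scoped Classical in
theorem vaughan_happy_swaps_at_most_bk_general (b k T : ℕ)
    (st : ℕ → Equiv.Perm (TV b k) × Equiv.Perm (TV b k))
    (hstart : st 0 = (1, piT b k))
    (hstep : ∀ i < T,
      HappySwapStep (TGraph b k) (st i) (st (i + 1)) ∨
      HappyDestStep (TGraph b k) (st i) (st (i + 1)) ∨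
      ShoveStep (TGraph b k) (st i) (st (i + 1))) :
    ((Finset.range T).filter fun i =>
      HappySwapStep (TGraph b k) (st i) (st (i + 1)) ∨
      HappyDestStep (TGraph b k) (st i) (st (i + 1))).card ≤ b * k := by
  have hinit : partner (st 0) = piT b k := by rw [hstart, partner, inv_one, mul_one]
  have layered : ∀ n ≤ T, ∃ layer, IsLayered (partner (st n)) layer := by
    intro n hn
    induction n with
    | zero => exact ⟨level, hinit ▸ isLayered_piT⟩
    | succ n ih =>
      obtain ⟨layer, I⟩ := ih (Nat.le_of_succ_le hn)
      exact (I.step (hstep n hn)).1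
  have hcount := card_filter_range_add_le (n := T)
    (f := fun i => (partner (st i)).support.card)
    (fun i hi => (layered i hi.le).elim fun _ I => (I.step (hstep i hi)).2)
    (fun i hi h => (layered i hi.le).elim fun _ I => I.card_support_lt h)
  rw [hinit] at hcount
  exact (Nat.le_of_add_right_le hcount).trans card_support_piT_le

end Tree

/-!
STATEMENT 19: In every execution of Vaughan's algorithm on the token swapping
instance `T_{k,b}` — i.e. every sequence of states starting at `(1, π_{T_{k,b}})`,
ending with all tokens happy, in which every step is a happy swap, a happy
destination swap, or (only when neither of the first two operations is available
anywhere) a symmetric shove — the total number of happy swaps performed is at most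
`b·k`.
-/
open scoped Classical in
theorem vaughan_happy_swaps_at_most_bk (b k : ℕ) (hb : Odd b) (T : ℕ)
    (st : ℕ → Equiv.Perm (TV b k) × Equiv.Perm (TV b k))
    (hstart : st 0 = (1, piT b k))
    (hstep : ∀ i < T,
      HappySwapStep (TGraph b k) (st i) (st (i + 1)) ∨
      HappyDestStep (TGraph b k) (st i) (st (i + 1)) ∨
      ((¬ ∃ st', HappySwapStep (TGraph b k) (st i) st') ∧
       (¬ ∃ st', HappyDestStep (TGraph b k) (st i) st') ∧
       ShoveStep (TGraph b k) (st i) (st (i + 1))))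
    (hend : (st T).1 = (st T).2) :
    ((Finset.range T).filter
        (fun i => HappySwapStep (TGraph b k) (st i) (st (i + 1)))).card ≤ b * k := by
  exact (Finset.card_le_card (Finset.monotone_filter_right _ fun _ _ => Or.inl)).trans
    (vaughan_happy_swaps_at_most_bk_general b k T st hstart fun i hi =>
      (hstep i hi).imp_right (Or.imp_right fun h => h.2.2))

end Straying
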